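/- arXiv:1507.03973 — 5 statements merged into one kernel-verified Lean document; each statement's English description precedes it below -/
import Mathlib

section
/- Let φ : V → V, J♯ : Hom(V,L) → V and ω♭ : V → Hom(V,L) be linear maps with J♯ skew and ω♭ skew, and let I be the endomorphism of 𝔻 = V ⊕ Hom(V,L) given by I(v,ψ) = (φ(v) + J♯(ψ), ω♭(v) − φ†(ψ)). Then I² = −id if and only if the three structure equations hold: (i) φ ∘ J♯ = J♯ ∘ φ†, (ii) φ² = −id_V − J♯ ∘ ω♭, (iii) ω♭ ∘ φ = φ† ∘ ω♭. (In particular, the remaining block identity ω♭ ∘ J♯ + (φ†)² = −id on Hom(V,L) is automatically implied by (i)–(iii) via adjunction, using that V is finite-dimensional and L is one-dimensional.) -/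
/-- The adjoint `φ† : Hom(V, L) → Hom(V, L)`, `φ†(ψ) := ψ ∘ φ`, of a linear map
`φ : V → V`, as a linear map. -/
def adjD {K V : Type*} (L : Type*) [Field K] [AddCommGroup V] [Module K V]
    [AddCommGroup L] [Module K L] (φ : V →ₗ[K] V) :
    (V →ₗ[K] L) →ₗ[K] (V →ₗ[K] L) :=
  (LinearMap.llcomp K V V L).flip φ

/-- For `I(v, ψ) = (φ v + J♯ ψ, ω♭ v − φ† ψ)` with `J♯` and `ω♭` skew,
`I² = −id` iff the three structure equations `φ ∘ J♯ = J♯ ∘ φ†`,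
`φ² = −id − J♯ ∘ ω♭`, `ω♭ ∘ φ = φ† ∘ ω♭` hold (the remaining block identity
`ω♭ ∘ J♯ + (φ†)² = −id` being automatic from these by adjunction). -/
theorem sq_neg_id_iff_structure_equations
    (K V L : Type*) [Field K] [AddCommGroup V] [Module K V] [FiniteDimensional K V]
    [AddCommGroup L] [Module K L] (hL : Module.finrank K L = 1)
    (φ : V →ₗ[K] V) (Js : (V →ₗ[K] L) →ₗ[K] V) (ωf : V →ₗ[K] V →ₗ[K] L)
    (hJ : ∀ ψ χ : V →ₗ[K] L, ψ (Js χ) = -χ (Js ψ))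
    (hω : ∀ v w : V, ωf v w = -ωf w v)
    (I : (V × (V →ₗ[K] L)) →ₗ[K] (V × (V →ₗ[K] L)))
    (hI : ∀ (v : V) (ψ : V →ₗ[K] L), I (v, ψ) = (φ v + Js ψ, ωf v - ψ.comp φ)) :
    (∀ α : V × (V →ₗ[K] L), I (I α) = -α) ↔
      (φ.comp Js = Js.comp (adjD L φ) ∧
       φ.comp φ = -LinearMap.id - Js.comp ωf ∧
       ωf.comp φ = (adjD L φ).comp ωf) := by
  constructor
  · intro h
    have h1 : ∀ v ψ, φ (φ v + Js ψ) + Js (ωf v - ψ.comp φ) = -v := by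
      intro v ψ
      have := congrArg Prod.fst (h (v, ψ))
      rw [hI, hI] at this
      exact this
    have h2 : ∀ v ψ, ωf (φ v + Js ψ) - (ωf v - ψ.comp φ).comp φ = -ψ := by
      intro v ψ
      have := congrArg Prod.snd (h (v, ψ))
      rw [hI, hI] at this
      exact this
    refine ⟨?_, ?_, ?_⟩
    · refine LinearMap.ext fun ψ => ?_
      have := h1 0 ψ
      simp only [map_zero, zero_add, zero_sub, map_neg, neg_zero] at this
      exact add_neg_eq_zero.mp this
    · refine LinearMap.ext fun v => ?_
      have := h1 v 0
      simp only [map_zero, add_zero, LinearMap.zero_comp, sub_zero] at this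
      exact eq_sub_of_add_eq this
    · refine LinearMap.ext fun v => ?_
      have := h2 v 0
      simp only [map_zero, add_zero, LinearMap.zero_comp, sub_zero, neg_zero] at this
      exact sub_eq_zero.mp this
  · rintro ⟨e1, e2, e3⟩ ⟨v, ψ⟩
    have e1' : ∀ ψ, φ (Js ψ) = Js (ψ.comp φ) := fun ψ => LinearMap.congr_fun e1 ψ
    have e2' : ∀ v, φ (φ v) = -v - Js (ωf v) := fun v => LinearMap.congr_fun e2 v
    have e3' : ∀ v, ωf (φ v) = (ωf v).comp φ := fun v => LinearMap.congr_fun e3 v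
    rw [hI, hI]
    refine Prod.ext ?_ ?_
    · change φ (φ v + Js ψ) + Js (ωf v - ψ.comp φ) = -v
      rw [map_add, map_sub, e1', e2']
      abel
    · change ωf (φ v + Js ψ) - (ωf v - ψ.comp φ).comp φ = -ψ
      refine LinearMap.ext fun w => ?_
      have h4 : ωf (Js ψ) w = ψ (Js (ωf w)) := by
        rw [hω, hJ, neg_neg]
      rw [map_add, e3']
      simp only [LinearMap.sub_apply, LinearMap.add_apply, LinearMap.comp_apply,
        LinearMap.neg_apply, h4, e2', map_sub, map_neg]
      abel
end

section
/- There is a one-to-one correspondence between generalized almost contact structures I on (V,L) and triples (φ, J♯, ω♭) of linear maps φ : V → V, J♯ : Hom(V,L) → V skew, ω♭ : V → Hom(V,L) skew satisfying φ ∘ J♯ = J♯ ∘ φ†, φ² = −id − J♯ ∘ ω♭, and ω♭ ∘ φ = φ† ∘ ω♭; the correspondence sends the triple (φ, J♯, ω♭) to the endomorphism I(v,ψ) = (φ(v) + J♯(ψ), ω♭(v) − φ†(ψ)) of 𝔻 = V ⊕ Hom(V,L). -/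
/-- The `L`-valued symmetric pairing on `𝔻 := V ⊕ Hom(V, L)`:
`⟨⟨(v, ψ), (w, χ)⟩⟩ := χ(v) + ψ(w)`. -/
def pairD {K V L : Type*} [Field K] [AddCommGroup V] [Module K V]
    [AddCommGroup L] [Module K L] (α β : V × (V →ₗ[K] L)) : L :=
  β.2 α.1 + α.2 β.1

set_option maxHeartbeats 2000000

/-- One-to-one correspondence between triples `(φ, J♯, ω♭)` (with `J♯`,
`ω♭` skew, satisfying the three structure equations) and generalized almost contact
structures `I` on `(V, L)` (endomorphisms of `𝔻 = V ⊕ Hom(V, L)` with `I² = −id`,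
skew-adjoint for the pairing), sending `(φ, J♯, ω♭)` to
`I(v, ψ) = (φ v + J♯ ψ, ω♭ v − φ† ψ)`. -/
theorem gacs_equiv_triples
    (K V L : Type*) [Field K] [AddCommGroup V] [Module K V] [FiniteDimensional K V]
    [AddCommGroup L] [Module K L] (hL : Module.finrank K L = 1) :
    ∃ e : {t : (V →ₗ[K] V) × ((V →ₗ[K] L) →ₗ[K] V) × (V →ₗ[K] V →ₗ[K] L) //
            (∀ ψ χ : V →ₗ[K] L, ψ (t.2.1 χ) = -χ (t.2.1 ψ)) ∧
            (∀ v w : V, t.2.2 v w = -t.2.2 w v) ∧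
            t.1.comp t.2.1 = t.2.1.comp (adjD L t.1) ∧
            t.1.comp t.1 = -LinearMap.id - t.2.1.comp t.2.2 ∧
            t.2.2.comp t.1 = (adjD L t.1).comp t.2.2} ≃
          {I : (V × (V →ₗ[K] L)) →ₗ[K] (V × (V →ₗ[K] L)) //
            (∀ α : V × (V →ₗ[K] L), I (I α) = -α) ∧
            (∀ α β : V × (V →ₗ[K] L), pairD (I α) β + pairD α (I β) = 0)},
      ∀ t (v : V) (ψ : V →ₗ[K] L),
        (e t).val (v, ψ) = (t.val.1 v + t.val.2.1 ψ, t.val.2.2 v - ψ.comp t.val.1) := by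
  classical
  have key : ∀ I : (V × (V →ₗ[K] L)) →ₗ[K] (V × (V →ₗ[K] L)),
      (∀ α β : V × (V →ₗ[K] L), pairD (I α) β + pairD α (I β) = 0) →
      ∀ ψ : V →ₗ[K] L, (I (0, ψ)).2 = -ψ.comp (LinearMap.fst K V (V →ₗ[K] L) ∘ₗ I ∘ₗ
        LinearMap.inl K V (V →ₗ[K] L)) := by
    intro I hI ψ
    ext w
    have h := hI (0, ψ) (w, 0)
    simp [pairD] at h
    simpa using eq_neg_of_add_eq_zero_left h
  have split : ∀ I : (V × (V →ₗ[K] L)) →ₗ[K] (V × (V →ₗ[K] L)), ∀ v ψ,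
      I (v, ψ) = I (v, 0) + I (0, ψ) := by
    intro I v ψ
    rw [← map_add]; simp
  refine ⟨{
    toFun := fun t => ⟨LinearMap.prod (t.1.1.coprod t.1.2.1)
      (t.1.2.2.coprod (-(adjD L t.1.1))), ?_, ?_⟩
    invFun := fun I => ⟨(LinearMap.fst K V (V →ₗ[K] L) ∘ₗ I.1 ∘ₗ LinearMap.inl K V (V →ₗ[K] L),
      LinearMap.fst K V (V →ₗ[K] L) ∘ₗ I.1 ∘ₗ LinearMap.inr K V (V →ₗ[K] L),
      LinearMap.snd K V (V →ₗ[K] L) ∘ₗ I.1 ∘ₗ LinearMap.inl K V (V →ₗ[K] L)), ?_, ?_, ?_, ?_, ?_⟩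
    left_inv := ?_
    right_inv := ?_ }, ?_⟩
  · obtain ⟨⟨φ, J, ω⟩, h1, h2, h3, h4, h5⟩ := t
    rintro ⟨v, ψ⟩
    simp only at h1 h2 h3 h4 h5
    have e3 := LinearMap.congr_fun h3 ψ
    have e4 := fun v => LinearMap.congr_fun h4 v
    have e5 := LinearMap.congr_fun h5 v
    simp at e3 e4 e5
    refine Prod.ext ?_ ?_
    · simp [e3, e4]
      abel
    · ext w
      have e6 := h2 (J ψ) w
      have e7 := h1 ψ (ω w)
      have e8 := LinearMap.congr_fun e5 w
      simp [adjD] at e8 ⊢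
      rw [e4 w, e8, e6, ← e7]
      simp
      abel
  · obtain ⟨⟨φ, J, ω⟩, h1, h2, h3, h4, h5⟩ := t
    rintro ⟨v, ψ⟩ ⟨w, χ⟩
    simp only at h1 h2
    simp [pairD, adjD]
    rw [h1 ψ χ, h2 v w]
    abel
  · intro ψ χ
    have h := I.2.2 (0, χ) (0, ψ)
    simp [pairD] at h
    simpa using eq_neg_of_add_eq_zero_left h
  · intro v w
    have h := I.2.2 (v, 0) (w, 0)
    simp [pairD] at h
    simpa using eq_neg_of_add_eq_zero_left h
  · ext1 ψ
    have h := I.2.1 (0, ψ)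
    have k := key I.1 I.2.2 ψ
    have s := split I.1 (I.1 (0, ψ)).1 (I.1 (0, ψ)).2
    rw [Prod.mk.eta, h, k] at s
    have s1 := congrArg Prod.fst s
    have n : ∀ χ : V →ₗ[K] L, I.1 (0, -χ) = -I.1 (0, χ) := by
      intro χ; rw [← map_neg]; simp
    rw [n] at s1
    simp at s1
    exact sub_eq_zero.1 ((sub_eq_add_neg _ _).trans s1.symm)
  · ext1 v
    have h := I.2.1 (v, 0)
    have s := split I.1 (I.1 (v, 0)).1 (I.1 (v, 0)).2
    rw [Prod.mk.eta, h] at s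
    have s1 := congrArg Prod.fst s
    simp at s1
    simp [s1]
  · ext1 v
    have h := I.2.1 (v, 0)
    have s := split I.1 (I.1 (v, 0)).1 (I.1 (v, 0)).2
    rw [Prod.mk.eta, h] at s
    have s1 := congrArg Prod.snd s
    rw [Prod.snd_add, key I.1 I.2.2] at s1
    simp at s1
    exact sub_eq_zero.1 ((sub_eq_add_neg _ _).trans s1.symm)
  · rintro ⟨⟨φ, J, ω⟩, h⟩
    apply Subtype.ext
    refine Prod.ext ?_ (Prod.ext ?_ ?_) <;> ext1 x <;> simp
  · rintro ⟨I, h1, h2⟩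
    apply Subtype.ext
    apply LinearMap.ext
    rintro ⟨v, ψ⟩
    have k := key I h2 ψ
    refine Eq.trans ?_ (split I v ψ).symm
    refine Prod.ext ?_ ?_
    · simp
    · have k2 : (I (v, 0) + I (0, ψ)).2 = (I (v, 0)).2 + (I (0, ψ)).2 := rfl
      refine Eq.trans ?_ (k2.trans (congrArg _ k)).symm
      rfl
  · intro t v ψ
    refine Prod.ext ?_ ?_
    · simp
    · simp [adjD, sub_eq_add_neg]
      rfl
end

section
/- Let (φ, J♯, ω♭) be a triple of linear maps (φ : V → V, J♯ : Hom(V,L) → V skew, ω♭ : V → Hom(V,L) skew) satisfying the structure equations φ ∘ J♯ = J♯ ∘ φ†, φ² = −id − J♯ ∘ ω♭, ω♭ ∘ φ = φ† ∘ ω♭, and suppose J♯ is bijective. Then, setting ω_J♭ := (J♯)⁻¹, one has ω♭ = −(ω_J♭ + φ† ∘ ω_J♭ ∘ φ); equivalently, in terms of the associated bilinear forms, ω = −(ω_J + φ*ω_J), where ω(v,w) := ω♭(v)(w), ω_J(v,w) := ω_J♭(v)(w) and (φ*ω_J)(v,w) := ω_J(φ(v), φ(w)). -/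
/-- If `(φ, J♯, ω♭)` satisfies the structure equations and `J♯` is
bijective then, with `ω_J♭ := (J♯)⁻¹`, one has `ω♭ = −(ω_J♭ + φ† ∘ ω_J♭ ∘ φ)`;
equivalently, for the bilinear forms, `ω = −(ω_J + φ*ω_J)` where
`(φ*ω_J)(v, w) := ω_J(φ v, φ w)`. -/
theorem omega_eq_neg_omegaJ_plus_pullback
    (K V L : Type*) [Field K] [AddCommGroup V] [Module K V] [FiniteDimensional K V]
    [AddCommGroup L] [Module K L] (hL : Module.finrank K L = 1)
    (φ : V →ₗ[K] V) (Js : (V →ₗ[K] L) →ₗ[K] V) (ωf : V →ₗ[K] V →ₗ[K] L)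
    (hJ : ∀ ψ χ : V →ₗ[K] L, ψ (Js χ) = -χ (Js ψ))
    (hω : ∀ v w : V, ωf v w = -ωf w v)
    (h1 : φ.comp Js = Js.comp (adjD L φ))
    (h2 : φ.comp φ = -LinearMap.id - Js.comp ωf)
    (h3 : ωf.comp φ = (adjD L φ).comp ωf)
    (hbij : Function.Bijective Js) :
    (∀ v : V,
      ωf v = -((LinearEquiv.ofBijective Js hbij).symm v
                + adjD L φ ((LinearEquiv.ofBijective Js hbij).symm (φ v)))) ∧
    (∀ v w : V,
      ωf v w = -((LinearEquiv.ofBijective Js hbij).symm v w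
                  + (LinearEquiv.ofBijective Js hbij).symm (φ v) (φ w))) := by
  have key : ∀ x : V, Js ((LinearEquiv.ofBijective Js hbij).symm x) = x := fun x =>
    (LinearEquiv.ofBijective Js hbij).apply_symm_apply x
  have main : ∀ v : V,
      ωf v = -((LinearEquiv.ofBijective Js hbij).symm v
                + adjD L φ ((LinearEquiv.ofBijective Js hbij).symm (φ v))) := by
    intro v
    apply hbij.1
    have e1 := LinearMap.congr_fun h1 ((LinearEquiv.ofBijective Js hbij).symm (φ v))
    have e2 := LinearMap.congr_fun h2 v
    simp only [LinearMap.comp_apply, LinearMap.sub_apply, LinearMap.neg_apply,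
      LinearMap.id_apply, key] at e1 e2
    rw [map_neg, map_add, key, ← e1, e2]
    abel
  refine ⟨main, fun v w => ?_⟩
  have h := LinearMap.congr_fun (main v) w
  simpa [adjD] using h
end

section
/- Let ω_J♭ : V → Hom(V,L) be a skew bijective linear map and let φ : V → V satisfy ω_J♭ ∘ φ = φ† ∘ ω_J♭. Define J♯ := (ω_J♭)⁻¹ : Hom(V,L) → V and ω♭ := −(ω_J♭ + φ† ∘ ω_J♭ ∘ φ) : V → Hom(V,L). Then J♯ is skew, ω♭ is skew, and the triple (φ, J♯, ω♭) satisfies the structure equations φ ∘ J♯ = J♯ ∘ φ†, φ² = −id − J♯ ∘ ω♭, ω♭ ∘ φ = φ† ∘ ω♭; hence it defines a generalized almost contact structure on (V,L) with invertible J♯. -/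
/-- `J♯ := (ω_J♭)⁻¹ : Hom(V, L) → V`, the inverse of a bijective `ω_J♭`. -/
noncomputable def JsOf {K V L : Type*} [Field K] [AddCommGroup V] [Module K V]
    [AddCommGroup L] [Module K L] (ωJb : V →ₗ[K] (V →ₗ[K] L))
    (hbij : Function.Bijective ωJb) : (V →ₗ[K] L) →ₗ[K] V :=
  (LinearEquiv.ofBijective ωJb hbij).symm.toLinearMap

/-- Given a skew bijective `ω_J♭ : V → Hom(V, L)` and `φ` with
`ω_J♭ ∘ φ = φ† ∘ ω_J♭`, the maps `J♯ := (ω_J♭)⁻¹` and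
`ω♭ := −(ω_J♭ + φ† ∘ ω_J♭ ∘ φ)` are skew, and the triple `(φ, J♯, ω♭)` satisfies
the structure equations `φ ∘ J♯ = J♯ ∘ φ†`, `φ² = −id − J♯ ∘ ω♭`,
`ω♭ ∘ φ = φ† ∘ ω♭`; moreover `J♯` is bijective, so the triple defines a
generalized almost contact structure on `(V, L)` with invertible `J♯`. -/
theorem contactHitchin_gives_gacs
    (K V L : Type*) [Field K] [AddCommGroup V] [Module K V] [FiniteDimensional K V]
    [AddCommGroup L] [Module K L] (hL : Module.finrank K L = 1)
    (ωJb : V →ₗ[K] (V →ₗ[K] L)) (φ : V →ₗ[K] V)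
    (hskew : ∀ v w : V, ωJb v w = -ωJb w v)
    (hbij : Function.Bijective ωJb)
    (hcompat : ωJb.comp φ = (adjD L φ).comp ωJb) :
    (∀ ψ χ : V →ₗ[K] L, ψ (JsOf ωJb hbij χ) = -χ (JsOf ωJb hbij ψ)) ∧
    (∀ v w : V,
      (-(ωJb + (adjD L φ).comp (ωJb.comp φ))) v w
        = -((-(ωJb + (adjD L φ).comp (ωJb.comp φ))) w v)) ∧
    φ.comp (JsOf ωJb hbij) = (JsOf ωJb hbij).comp (adjD L φ) ∧
    φ.comp φ = -LinearMap.id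
      - (JsOf ωJb hbij).comp (-(ωJb + (adjD L φ).comp (ωJb.comp φ))) ∧
    (-(ωJb + (adjD L φ).comp (ωJb.comp φ))).comp φ
      = (adjD L φ).comp (-(ωJb + (adjD L φ).comp (ωJb.comp φ))) ∧
    Function.Bijective (JsOf ωJb hbij) := by
  have hc : ∀ v w : V, ωJb (φ v) w = ωJb v (φ w) := fun v w =>
    LinearMap.congr_fun (LinearMap.congr_fun hcompat v) w
  have ha : ∀ (ψ : V →ₗ[K] L) (w : V), adjD L φ ψ w = ψ (φ w) := fun _ _ => rfl
  have h1 : ∀ ψ : V →ₗ[K] L, ωJb (JsOf ωJb hbij ψ) = ψ := fun ψ =>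
    (LinearEquiv.ofBijective ωJb hbij).apply_symm_apply ψ
  refine ⟨?_, ?_, ?_, ?_, ?_, (LinearEquiv.ofBijective ωJb hbij).symm.bijective⟩
  · intro ψ χ
    have h := hskew (JsOf ωJb hbij ψ) (JsOf ωJb hbij χ)
    rwa [h1, h1] at h
  · intro v w
    simp only [LinearMap.neg_apply, LinearMap.add_apply, LinearMap.comp_apply, ha]
    rw [hskew v w, hskew (φ v) (φ w)]
    abel
  · ext ψ
    apply hbij.1
    ext w
    simp only [LinearMap.comp_apply, h1, ha, hc]
  · ext v
    apply hbij.1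
    ext w
    simp only [LinearMap.comp_apply, LinearMap.sub_apply, LinearMap.neg_apply,
      LinearMap.add_apply, LinearMap.id_apply, map_sub, map_neg, map_add, h1, ha, hc]
    abel
  · ext v w
    simp only [LinearMap.comp_apply, LinearMap.neg_apply, LinearMap.add_apply, map_neg,
      map_add, ha, hc]
end

section
/- There is a one-to-one correspondence between (a) triples (φ, J♯, ω♭) with J♯ skew and bijective, ω♭ skew, satisfying the structure equations φ ∘ J♯ = J♯ ∘ φ†, φ² = −id − J♯ ∘ ω♭, ω♭ ∘ φ = φ† ∘ ω♭ (i.e. generalized almost contact structures on (V,L) with nondegenerate J), and (b) pairs (ω_J♭, φ) where ω_J♭ : V → Hom(V,L) is skew and bijective and φ : V → V satisfies ω_J♭ ∘ φ = φ† ∘ ω_J♭ (the linear-algebraic datum of a contact–Hitchin pair). The correspondence is given by ω_J♭ = (J♯)⁻¹ in one direction, and by J♯ = (ω_J♭)⁻¹, ω♭ = −(ω_J♭ + φ† ∘ ω_J♭ ∘ φ) in the other; these two assignments are mutually inverse. -/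
/-- One-to-one correspondence between (a) triples `(φ, J♯, ω♭)` with
`J♯` skew bijective, `ω♭` skew, satisfying the structure equations (generalized
almost contact structures with nondegenerate `J`), and (b) pairs `(ω_J♭, φ)` with
`ω_J♭` skew bijective and `ω_J♭ ∘ φ = φ† ∘ ω_J♭` (contact–Hitchin pairs).  In one
direction `ω_J♭ = (J♯)⁻¹` and `φ` is preserved; in the other `J♯ = (ω_J♭)⁻¹` and
`ω♭ = −(ω_J♭ + φ† ∘ ω_J♭ ∘ φ)`; these assignments are mutually inverse. -/
theorem gacs_nondeg_equiv_contactHitchin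
    (K V L : Type*) [Field K] [AddCommGroup V] [Module K V] [FiniteDimensional K V]
    [AddCommGroup L] [Module K L] (hL : Module.finrank K L = 1) :
    ∃ e : {t : (V →ₗ[K] V) × ((V →ₗ[K] L) →ₗ[K] V) × (V →ₗ[K] V →ₗ[K] L) //
            (∀ ψ χ : V →ₗ[K] L, ψ (t.2.1 χ) = -χ (t.2.1 ψ)) ∧
            Function.Bijective t.2.1 ∧
            (∀ v w : V, t.2.2 v w = -t.2.2 w v) ∧
            t.1.comp t.2.1 = t.2.1.comp (adjD L t.1) ∧
            t.1.comp t.1 = -LinearMap.id - t.2.1.comp t.2.2 ∧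
            t.2.2.comp t.1 = (adjD L t.1).comp t.2.2} ≃
          {p : (V →ₗ[K] V →ₗ[K] L) × (V →ₗ[K] V) //
            (∀ v w : V, p.1 v w = -p.1 w v) ∧
            Function.Bijective p.1 ∧
            p.1.comp p.2 = (adjD L p.2).comp p.1},
      (∀ t, (e t).val.2 = t.val.1 ∧
            t.val.2.1.comp (e t).val.1 = LinearMap.id ∧
            (e t).val.1.comp t.val.2.1 = LinearMap.id) ∧
      (∀ p, (e.symm p).val.1 = p.val.2 ∧
            p.val.1.comp (e.symm p).val.2.1 = LinearMap.id ∧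
            (e.symm p).val.2.1.comp p.val.1 = LinearMap.id ∧
            (e.symm p).val.2.2
              = -(p.val.1 + (adjD L p.val.2).comp (p.val.1.comp p.val.2))) := by
  have key : ∀ (J : (V →ₗ[K] L) →ₗ[K] V) (hJ : Function.Bijective J) (v : V),
      J ((LinearEquiv.ofBijective J hJ).symm v) = v := fun J hJ v =>
    (LinearEquiv.ofBijective J hJ).apply_symm_apply v
  have key2 : ∀ (J : (V →ₗ[K] L) →ₗ[K] V) (hJ : Function.Bijective J) (v : V →ₗ[K] L),
      (LinearEquiv.ofBijective J hJ).symm (J v) = v := fun J hJ v =>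
    (LinearEquiv.ofBijective J hJ).symm_apply_apply v
  have key3 : ∀ (W : V →ₗ[K] V →ₗ[K] L) (hW : Function.Bijective W) (v : V →ₗ[K] L),
      W ((LinearEquiv.ofBijective W hW).symm v) = v := fun J hJ v =>
    (LinearEquiv.ofBijective J hJ).apply_symm_apply v
  have key4 : ∀ (W : V →ₗ[K] V →ₗ[K] L) (hW : Function.Bijective W) (v : V),
      (LinearEquiv.ofBijective W hW).symm (W v) = v := fun J hJ v =>
    (LinearEquiv.ofBijective J hJ).symm_apply_apply v
  have adj : ∀ (φ : V →ₗ[K] V) (ψ : V →ₗ[K] L) (v : V), adjD L φ ψ v = ψ (φ v) :=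
    fun _ _ _ => rfl
  refine ⟨
    { toFun := fun t => ⟨((LinearEquiv.ofBijective t.1.2.1 t.2.2.1).symm.toLinearMap, t.1.1), ?_⟩
      invFun := fun p => ⟨(p.1.2, (LinearEquiv.ofBijective p.1.1 p.2.2.1).symm.toLinearMap,
        -(p.1.1 + (adjD L p.1.2).comp (p.1.1.comp p.1.2))), ?_⟩
      left_inv := ?_
      right_inv := ?_ }, ?_, ?_⟩
  · obtain ⟨⟨φ, J, ω⟩, h1, h2, h3, h4, h5, h6⟩ := t
    refine ⟨?_, (LinearEquiv.ofBijective J h2).symm.bijective, ?_⟩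
    · intro v w
      have := h1 ((LinearEquiv.ofBijective J h2).symm v) ((LinearEquiv.ofBijective J h2).symm w)
      dsimp only at this
      rw [key, key] at this
      exact this
    · refine LinearMap.ext fun v => h2.1 ?_
      have := LinearMap.congr_fun h4 ((LinearEquiv.ofBijective J h2).symm v)
      simp only [LinearMap.comp_apply, LinearEquiv.coe_coe] at this ⊢
      rw [key] at this
      rw [key]
      exact this
  · obtain ⟨⟨W, φ⟩, h1, h2, h3⟩ := p
    dsimp only at h1 h2 h3
    have h3' : ∀ v w, W (φ v) w = W v (φ w) := fun v w =>
      LinearMap.congr_fun (LinearMap.congr_fun h3 v) w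
    refine ⟨?_, (LinearEquiv.ofBijective W h2).symm.bijective, ?_, ?_, ?_, ?_⟩
    · intro ψ χ
      have := h1 ((LinearEquiv.ofBijective W h2).symm ψ) ((LinearEquiv.ofBijective W h2).symm χ)
      rw [key3, key3] at this
      exact this
    · intro v w
      simp only [LinearMap.neg_apply, LinearMap.add_apply, LinearMap.comp_apply, adj]
      rw [h1 v w, h1 (φ v) (φ w)]
      abel
    · refine LinearMap.ext fun ψ => h2.1 ?_
      have := LinearMap.congr_fun h3 ((LinearEquiv.ofBijective W h2).symm ψ)
      simp only [LinearMap.comp_apply, LinearEquiv.coe_coe] at this ⊢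
      rw [key3] at this
      rw [key3]
      exact this
    · refine LinearMap.ext fun v => h2.1 (LinearMap.ext fun w => ?_)
      simp only [LinearMap.comp_apply, LinearEquiv.coe_coe, LinearMap.sub_apply, map_sub, key3,
        LinearMap.neg_apply, LinearMap.add_apply, adj, LinearMap.id_apply, map_neg, h3']
      abel
    · refine LinearMap.ext fun v => LinearMap.ext fun w => ?_
      simp only [LinearMap.comp_apply, LinearMap.neg_apply, LinearMap.add_apply, adj, h3']
  · rintro ⟨⟨φ, J, ω⟩, h1, h2, h3, h4, h5, h6⟩
    dsimp only at h1 h2 h3 h4 h5 h6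
    refine Subtype.ext (Prod.ext rfl (Prod.ext ?_ ?_))
    · refine LinearMap.ext fun ψ => ?_
      apply (LinearEquiv.ofBijective J h2).symm.injective
      exact (key3 (LinearEquiv.ofBijective J h2).symm.toLinearMap
        (LinearEquiv.ofBijective J h2).symm.bijective ψ).trans (key2 J h2 ψ).symm
    · refine LinearMap.ext fun v => h2.1 ?_
      have h4' := LinearMap.congr_fun h4 ((LinearEquiv.ofBijective J h2).symm (φ v))
      have h5' := LinearMap.congr_fun h5 v
      simp only [LinearMap.comp_apply, LinearEquiv.coe_coe, LinearMap.sub_apply, 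
        LinearMap.neg_apply, LinearMap.add_apply, LinearMap.id_apply, map_neg, map_add, key]
        at h4' h5' ⊢
      rw [← h4', h5']
      abel
  · rintro ⟨⟨W, φ⟩, h1, h2, h3⟩
    dsimp only at h1 h2 h3
    refine Subtype.ext (Prod.ext ?_ rfl)
    refine LinearMap.ext fun v => ?_
    apply (LinearEquiv.ofBijective W h2).symm.injective
    exact (key (LinearEquiv.ofBijective W h2).symm.toLinearMap
        (LinearEquiv.ofBijective W h2).symm.bijective v).trans (key4 W h2 v).symm
  · intro t
    exact ⟨rfl, LinearMap.ext fun v => key _ t.2.2.1 v, LinearMap.ext fun v => key2 _ t.2.2.1 v⟩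
  · intro p
    exact ⟨rfl, LinearMap.ext fun v => key3 _ p.2.2.1 v, LinearMap.ext fun v => key4 _ p.2.2.1 v,
      rfl⟩
end
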